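/- arXiv:1710.02329 — 3 statements merged into one kernel-verified Lean document; each statement's English description precedes it below -/
import Mathlib

section
/- Let A = (L, R, Σ, T) be a complete deterministic register automaton over an infinite data domain D that admits a synchronizing data word. Then there exists a data word w over Σ × D with |data(w)| ≤ |R| such that post(L × D^R, w) ⊆ L × data(w)^R, i.e., after reading w from any configuration, every reached configuration has all of its register values in data(w). -/
open scoped Classical

/-- Register constraints over a set `R` of registers: built from the atom `true` and
atoms `= r` for `r ∈ R` using conjunction and negation. -/
inductive RC (R : Type) : Type
  | tt : RC R
  | req : R → RC R
  | conj : RC R → RC R → RC R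
  | neg : RC R → RC R

/-- Satisfaction of a register constraint by a register valuation `ν` and a datum `d`. -/
def RC.sat {R D : Type} (ν : R → D) (d : D) : RC R → Prop
  | RC.tt => True
  | RC.req r => ν r = d
  | RC.conj φ ψ => RC.sat ν d φ ∧ RC.sat ν d ψ
  | RC.neg φ => ¬ RC.sat ν d φ

/-- A configuration: a location together with a register valuation. -/
abbrev Config (L R D : Type) : Type := L × (R → D)

/-- A transition: source location, letter, guard, update set, target location. -/
abbrev RATrans (L A R : Type) : Type := L × A × RC R × Set R × L

/-- The update `ν[up := d]` of a register valuation. -/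
noncomputable def updVal {R D : Type} (ν : R → D) (up : Set R) (d : D) : R → D :=
  fun r => if r ∈ up then d else ν r

/-- One-step successor relation of the register automaton with transition relation `T`:
`Step T q (a, d) q'` holds iff `q' ∈ post(q, (a, d))`. -/
def Step {L A R D : Type} (T : Set (RATrans L A R)) (q : Config L R D) (i : A × D)
    (q' : Config L R D) : Prop :=
  ∃ (φ : RC R) (up : Set R) (ℓ' : L),
    (q.1, i.1, φ, up, ℓ') ∈ T ∧ RC.sat q.2 i.2 φ ∧ q' = (ℓ', updVal q.2 up i.2)

/-- `post` of a set of configurations on a single input. -/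
def postStep {L A R D : Type} (T : Set (RATrans L A R)) (S : Set (Config L R D)) (i : A × D) :
    Set (Config L R D) :=
  {q' | ∃ q ∈ S, Step T q i q'}

/-- `post` of a set of configurations on a data word. -/
def postWord {L A R D : Type} (T : Set (RATrans L A R)) (S : Set (Config L R D)) :
    List (A × D) → Set (Config L R D)
  | [] => S
  | i :: w => postWord T (postStep T S i) w

/-- Completeness: every configuration has at least one successor on every input. -/
def RAComplete (D : Type) {L A R : Type} (T : Set (RATrans L A R)) : Prop :=
  ∀ (q : Config L R D) (i : A × D), ∃ q', Step T q i q'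

/-- Determinism: every configuration has at most one successor on every input. -/
def RADet (D : Type) {L A R : Type} (T : Set (RATrans L A R)) : Prop :=
  ∀ (q : Config L R D) (i : A × D) (q₁ q₂ : Config L R D),
    Step T q i q₁ → Step T q i q₂ → q₁ = q₂

/-- The set of data values occurring in a data word. -/
def dataSet {A D : Type} (w : List (A × D)) : Set D := {d | ∃ p ∈ w, p.2 = d}

/-- A synchronizing data word: a nonempty data word sending the set of all
configurations to a single configuration. -/
def IsSync (D : Type) {L A R : Type} (T : Set (RATrans L A R)) (w : List (A × D)) : Prop :=
  w ≠ [] ∧ ∃ q : Config L R D, postWord T (Set.univ : Set (Config L R D)) w = {q}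

/-
Fix a set `X` of `|R|` data. A configuration `q` storing a datum outside `X` leaves some `x ∈ X`
unstored, and this `x` behaves for `q` exactly like any other datum not stored in `q`. Hence a
word `w` over `W` can be replayed from `q` with data of `X` only: take a copy `q'` of `q` with
values outside `W`, follow its run on `w`, and answer each input datum by the value of `X` playing
the same role, until all the registers hold values of `X`. If `w` drives `q'` into `L × W^R`, the
replay drives `q` into `L × X^R`.

Words over `X` do not distinguish configurations with the same location, the same equalities
between registers and the same registers equal to each `x ∈ X`. There are finitely many such types,
and `L × X^R` is stable under words over `X`, so concatenating one such replay per type drives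
every configuration into `L × X^R`.
-/

section DataWords

variable {A D : Type}

theorem dataSet_nil : dataSet ([] : List (A × D)) = ∅ := by
  simp [dataSet]

theorem dataSet_cons (i : A × D) (w : List (A × D)) :
    dataSet (i :: w) = insert i.2 (dataSet w) := by
  ext d
  simp [dataSet, eq_comm]

theorem dataSet_append (u v : List (A × D)) : dataSet (u ++ v) = dataSet u ∪ dataSet v := by
  induction u with
  | nil => simp [dataSet_nil]
  | cons i u ih => rw [List.cons_append, dataSet_cons, dataSet_cons, ih, Set.insert_union]

theorem finite_dataSet (w : List (A × D)) : (dataSet w).Finite := by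
  induction w with
  | nil => simp [dataSet_nil]
  | cons i w ih => exact dataSet_cons i w ▸ ih.insert i.2

theorem exists_dataSet_eq [Nonempty A] {X : Set D} (hX : X.Finite) :
    ∃ w : List (A × D), dataSet w = X := by
  induction X, hX using Set.Finite.induction_on with
  | empty => exact ⟨[], dataSet_nil⟩
  | @insert d X _ _ ih =>
    obtain ⟨w, rfl⟩ := ih
    exact ⟨(Classical.arbitrary A, d) :: w, dataSet_cons _ w⟩

end DataWords

section Successors

variable {L A R D : Type} {T : Set (RATrans L A R)}

theorem postStep_mono {S S' : Set (Config L R D)} (h : S ⊆ S') (i : A × D) :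
    postStep T S i ⊆ postStep T S' i := by
  rintro p ⟨q, hq, hstep⟩
  exact ⟨q, h hq, hstep⟩

theorem postStep_union (S S' : Set (Config L R D)) (i : A × D) :
    postStep T (S ∪ S') i = postStep T S i ∪ postStep T S' i := by
  ext p
  simp only [postStep, Set.mem_union, Set.mem_ofPred_eq, or_and_right, exists_or]

theorem postWord_mono {S S' : Set (Config L R D)} (h : S ⊆ S') (w : List (A × D)) :
    postWord T S w ⊆ postWord T S' w := by
  induction w generalizing S S' with
  | nil => exact h
  | cons i _ ih => exact ih (postStep_mono h i)

theorem postWord_union (S S' : Set (Config L R D)) (w : List (A × D)) :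
    postWord T (S ∪ S') w = postWord T S w ∪ postWord T S' w := by
  induction w generalizing S S' with
  | nil => rfl
  | cons i w ih => rw [postWord, postStep_union, ih, postWord, postWord]

theorem postWord_append (S : Set (Config L R D)) (u v : List (A × D)) :
    postWord T S (u ++ v) = postWord T (postWord T S u) v := by
  induction u generalizing S with
  | nil => rfl
  | cons _ _ ih => exact ih _

theorem RAComplete.postWord_nonempty (hcomp : RAComplete D T) {S : Set (Config L R D)}
    (hS : S.Nonempty) (w : List (A × D)) : (postWord T S w).Nonempty := by
  induction w generalizing S with
  | nil => exact hS
  | cons i w ih =>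
    obtain ⟨q, hq⟩ := hS
    obtain ⟨p, hstep⟩ := hcomp q i
    exact ih ⟨p, q, hq, hstep⟩

theorem RADet.postStep_subsingleton (hdet : RADet D T) {S : Set (Config L R D)}
    (hS : S.Subsingleton) (i : A × D) : (postStep T S i).Subsingleton := by
  rintro p ⟨q, hq, hp⟩ p' ⟨q', hq', hp'⟩
  obtain rfl := hS hq hq'
  exact hdet q i p p' hp hp'

theorem RADet.postWord_subsingleton (hdet : RADet D T) {S : Set (Config L R D)}
    (hS : S.Subsingleton) (w : List (A × D)) : (postWord T S w).Subsingleton := by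
  induction w generalizing S with
  | nil => exact hS
  | cons i _ ih => exact ih (hdet.postStep_subsingleton hS i)

end Successors

section ValuesIn

variable {L A R D : Type} {T : Set (RATrans L A R)}

/-- The set `L × X^R` of configurations all of whose register values lie in `X`. -/
def valuesIn (L R : Type) {D : Type} (X : Set D) : Set (Config L R D) :=
  {q | ∀ r, q.2 r ∈ X}

theorem postStep_subset_valuesIn {X : Set D} {S : Set (Config L R D)} {i : A × D}
    (hS : S ⊆ valuesIn L R X) (hi : i.2 ∈ X) : postStep T S i ⊆ valuesIn L R X := by
  rintro _ ⟨q, hq, φ, up, ℓ, _, _, rfl⟩ r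
  by_cases hr : r ∈ up
  · simpa only [updVal, if_pos hr] using hi
  · simpa only [updVal, if_neg hr] using hS hq r

theorem postWord_subset_valuesIn {X : Set D} {S : Set (Config L R D)} {w : List (A × D)}
    (hS : S ⊆ valuesIn L R X) (hw : dataSet w ⊆ X) : postWord T S w ⊆ valuesIn L R X := by
  induction w generalizing S with
  | nil => exact hS
  | cons i w ih =>
    rw [dataSet_cons, Set.insert_subset_iff] at hw
    exact ih (postStep_subset_valuesIn hS hw.1) hw.2

theorem IsSync.postWord_univ_subset [Finite R] [Infinite D] (hcomp : RAComplete D T)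
    {w : List (A × D)} (hw : IsSync D T w) :
    postWord T Set.univ w ⊆ valuesIn L R (dataSet w) := by
  obtain ⟨-, q, hq⟩ := hw
  obtain ⟨d, hd⟩ := (Set.finite_range q.2).exists_notMem
  -- Starting with `d` in every register still leads to `q`, which does not store `d`.
  let start : Config L R D := (q.1, fun _ => d)
  have hstart : {start} ⊆ valuesIn L R (insert d (dataSet w)) :=
    Set.singleton_subset_iff.2 fun _ => Set.mem_insert d _
  obtain ⟨p, hp⟩ := hcomp.postWord_nonempty (Set.singleton_nonempty start) w
  obtain rfl : p = q := hq.subset (postWord_mono (Set.subset_univ _) w hp)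
  have hvals := postWord_subset_valuesIn hstart (Set.subset_insert d _) hp
  rw [hq, Set.singleton_subset_iff]
  exact fun r => (hvals r).resolve_left fun h => hd ⟨r, h⟩

end ValuesIn

section Correspondence

variable {L A R D : Type} {T : Set (RATrans L A R)}

theorem RC.sat_congr {ν ν' : R → D} {d d' : D} (h : ∀ r, ν r = d ↔ ν' r = d') (φ : RC R) :
    RC.sat ν d φ ↔ RC.sat ν' d' φ := by
  induction φ with
  | tt => rfl
  | req r => exact h r
  | conj φ ψ ihφ ihψ => exact and_congr ihφ ihψ
  | neg φ ih => exact not_congr ih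

theorem updVal_eq_updVal_iff {ν ν' : R → D} {d d' : D} (hd : ∀ r, ν r = d ↔ ν' r = d')
    (hν : ∀ r s, ν r = ν s ↔ ν' r = ν' s) (up : Set R) (r s : R) :
    updVal ν up d r = updVal ν up d s ↔ updVal ν' up d' r = updVal ν' up d' s := by
  by_cases hr : r ∈ up <;> by_cases hs : s ∈ up <;> simp only [updVal, hr, hs, if_true, if_false]
  · rw [eq_comm, hd s, eq_comm]
  · exact hd r
  · exact hν r s

/-- Two configurations correspond via a relation `ρ` on data if they have the same location and
the same equalities between registers, and `ρ` relates their values register by register. The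
relation `ρ` records what has to be remembered about the actual values: which elements of a
set of constants they are, or membership in given sets of data. -/
structure Corresponds (ρ : D → D → Prop) (q q' : Config L R D) : Prop where
  loc_eq : q.1 = q'.1
  eq_iff : ∀ r s, q.2 r = q.2 s ↔ q'.2 r = q'.2 s
  rel : ∀ r, ρ (q.2 r) (q'.2 r)

theorem Corresponds.exists_step {ρ : D → D → Prop} {q q' p : Config L R D} {a : A} {d d' : D}
    (h : Corresponds ρ q q') (hd : ∀ r, q.2 r = d ↔ q'.2 r = d') (hρ : ρ d d')
    (hstep : Step T q (a, d) p) : ∃ p', Step T q' (a, d') p' ∧ Corresponds ρ p p' := by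
  obtain ⟨φ, up, ℓ, hT, hsat, rfl⟩ := hstep
  refine ⟨(ℓ, updVal q'.2 up d'), ⟨φ, up, ℓ, h.loc_eq ▸ hT, (RC.sat_congr hd φ).1 hsat, rfl⟩,
    rfl, updVal_eq_updVal_iff hd h.eq_iff up, fun r => ?_⟩
  by_cases hr : r ∈ up
  · simpa only [updVal, if_pos hr] using hρ
  · simpa only [updVal, if_neg hr] using h.rel r

end Correspondence

section Replay

variable {L A R D : Type} {T : Set (RATrans L A R)}

theorem exists_mem_forall_ne [Fintype R] {X : Finset D} (hX : Fintype.card R ≤ X.card)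
    {ν : R → D} (hν : ¬ ∀ r, ν r ∈ X) : ∃ x ∈ X, ∀ r, ν r ≠ x := by
  by_contra! hcover
  have hsub : X ⊆ Finset.univ.image ν := fun x hx => by simpa using hcover x hx
  have heq : X = Finset.univ.image ν :=
    Finset.eq_of_subset_of_card_le hsub (Finset.card_image_le.trans hX)
  exact hν fun r => heq ▸ Finset.mem_image_of_mem ν (Finset.mem_univ r)

theorem Corresponds.exists_mem_forall_eq_iff [Fintype R] {X : Finset D}
    (hX : Fintype.card R ≤ X.card) {W : Set D} {q q' : Config L R D}
    (h : Corresponds (fun e e' => e' ∈ W → e ∈ X) q q') (hq : q ∉ valuesIn L R (X : Set D))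
    {d : D} (hd : d ∈ W) : ∃ x ∈ X, ∀ r, q.2 r = x ↔ q'.2 r = d := by
  by_cases hstored : ∃ s, q'.2 s = d
  · obtain ⟨s, rfl⟩ := hstored
    exact ⟨q.2 s, h.rel s hd, fun r => h.eq_iff r s⟩
  · obtain ⟨x, hx, hne⟩ := exists_mem_forall_ne hX hq
    exact ⟨x, hx, fun r => iff_of_false (hne r) fun hr => hstored ⟨r, hr⟩⟩

theorem Corresponds.exists_postWord_subset_valuesIn [Fintype R] (hdet : RADet D T)
    {X : Finset D} (hX : Fintype.card R ≤ X.card) {W : Set D} {w : List (A × D)}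
    (hw : dataSet w ⊆ W) {q q' : Config L R D}
    (h : Corresponds (fun e e' => e' ∈ W → e ∈ X) q q')
    (hpost : postWord T {q'} w ⊆ valuesIn L R W) :
    ∃ v : List (A × D), dataSet v ⊆ X ∧ postWord T {q} v ⊆ valuesIn L R (X : Set D) := by
  induction w generalizing q q' with
  | nil =>
    exact ⟨[], by simp [dataSet_nil], Set.singleton_subset_iff.2 fun r => h.rel r (hpost rfl r)⟩
  | cons i w ih =>
    by_cases hq : q ∈ valuesIn L R (X : Set D)
    · exact ⟨[], by simp [dataSet_nil], Set.singleton_subset_iff.2 hq⟩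
    obtain ⟨a, d⟩ := i
    rw [dataSet_cons, Set.insert_subset_iff] at hw
    obtain ⟨x, hx, hxd⟩ := h.exists_mem_forall_eq_iff hX hq hw.1
    suffices ∃ v : List (A × D), dataSet v ⊆ X ∧
        postWord T (postStep T {q} (a, x)) v ⊆ valuesIn L R (X : Set D) by
      obtain ⟨v, hv, hvX⟩ := this
      exact ⟨(a, x) :: v, by simpa [dataSet_cons, Set.insert_subset_iff] using ⟨hx, hv⟩, hvX⟩
    have hsub := hdet.postStep_subsingleton (Set.subsingleton_singleton (a := q)) (a, x)
    obtain hnone | ⟨p, hp⟩ := hsub.eq_empty_or_singleton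
    · exact ⟨[], by simp [dataSet_nil], by simp [hnone, postWord]⟩
    · obtain ⟨_, rfl, hstep⟩ := hp.superset rfl
      obtain ⟨p', hstep', hp'⟩ := h.exists_step hxd (fun _ => hx) hstep
      have hmem : p' ∈ postStep T {q'} (a, d) := ⟨q', rfl, hstep'⟩
      have hpost' : postWord T {p'} w ⊆ valuesIn L R W :=
        (postWord_mono (Set.singleton_subset_iff.2 hmem) w).trans hpost
      exact hp ▸ ih hw.2 hp' hpost'

theorem exists_embedding_forall_notMem [Infinite D] {W : Set D} (hW : W.Finite) :
    ∃ e : D ↪ D, ∀ d, e d ∉ W := by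
  lift W to Finset D using hW
  obtain ⟨e⟩ := Cardinal.eq.1 (Cardinal.mk_compl_finset_of_infinite W)
  exact ⟨e.symm.toEmbedding.trans (Function.Embedding.subtype _), fun d => (e.symm d).2⟩

theorem exists_postWord_subset_valuesIn_of_subsingleton [Fintype R] [Infinite D]
    (hdet : RADet D T) {w : List (A × D)}
    (hw : postWord T Set.univ w ⊆ valuesIn L R (dataSet w))
    {X : Finset D} (hX : Fintype.card R ≤ X.card) {S : Set (Config L R D)}
    (hS : S.Subsingleton) :
    ∃ v : List (A × D), dataSet v ⊆ X ∧ postWord T S v ⊆ valuesIn L R (X : Set D) := by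
  obtain rfl | ⟨q, rfl⟩ := hS.eq_empty_or_singleton
  · exact ⟨[], by simp [dataSet_nil], Set.empty_subset _⟩
  obtain ⟨e, he⟩ := exists_embedding_forall_notMem (finite_dataSet w)
  have hcopy : Corresponds (fun d d' => d' ∈ dataSet w → d ∈ X) q (q.1, e ∘ q.2) :=
    ⟨rfl, fun _ _ => e.injective.eq_iff.symm, fun r hr => absurd hr (he (q.2 r))⟩
  exact hcopy.exists_postWord_subset_valuesIn hdet hX subset_rfl
    ((postWord_mono (Set.subset_univ _) w).trans hw)

theorem exists_postWord_subset_valuesIn_of_finite [Fintype R] [Infinite D] (hdet : RADet D T)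
    {w : List (A × D)} (hw : postWord T Set.univ w ⊆ valuesIn L R (dataSet w))
    {X : Finset D} (hX : Fintype.card R ≤ X.card) {S : Set (Config L R D)} (hS : S.Finite) :
    ∃ u : List (A × D), dataSet u ⊆ X ∧ postWord T S u ⊆ valuesIn L R (X : Set D) := by
  induction S, hS using Set.Finite.induction_on with
  | empty =>
    exact exists_postWord_subset_valuesIn_of_subsingleton hdet hw hX Set.subsingleton_empty
  | @insert q S _ _ ih =>
    obtain ⟨u, hu, huS⟩ := ih
    have hqu : (postWord T {q} u).Subsingleton :=
      hdet.postWord_subsingleton Set.subsingleton_singleton u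
    obtain ⟨v, hv, hvq⟩ := exists_postWord_subset_valuesIn_of_subsingleton hdet hw hX hqu
    refine ⟨u ++ v, dataSet_append u v ▸ Set.union_subset hu hv, ?_⟩
    rw [postWord_append, Set.insert_eq, postWord_union, postWord_union]
    exact Set.union_subset hvq (postWord_subset_valuesIn huS hv)

end Replay

section Types

variable {L A R D : Type} {T : Set (RATrans L A R)}

/-- Having the same type over `X`: same location, same equalities between registers and, for each
`x ∈ X`, the same registers holding `x`. -/
def SameType (X : Set D) (q q' : Config L R D) : Prop :=
  Corresponds (fun e e' => ∀ x ∈ X, e = x ↔ e' = x) q q'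

theorem SameType.mem_valuesIn {X : Set D} {q q' : Config L R D} (h : SameType X q q')
    (hq' : q' ∈ valuesIn L R X) : q ∈ valuesIn L R X := fun r =>
  (h.rel r _ (hq' r)).2 rfl ▸ hq' r

theorem exists_sameType_of_mem_postWord {X : Set D} {w : List (A × D)} (hw : dataSet w ⊆ X)
    {S S' : Set (Config L R D)} (hS : ∀ q ∈ S, ∃ q' ∈ S', SameType X q q')
    {p : Config L R D} (hp : p ∈ postWord T S w) : ∃ p' ∈ postWord T S' w, SameType X p p' := by
  induction w generalizing S S' with
  | nil => exact hS p hp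
  | cons i w ih =>
    rw [dataSet_cons, Set.insert_subset_iff] at hw
    refine ih hw.2 (S' := postStep T S' i) ?_ hp
    rintro m ⟨q, hq, hstep⟩
    obtain ⟨q', hq', h⟩ := hS q hq
    obtain ⟨m', hstep', hm⟩ := h.exists_step (fun r => h.rel r _ hw.1) (fun _ _ => Iff.rfl) hstep
    exact ⟨m', ⟨q', hq', hstep'⟩, hm⟩

theorem exists_finite_forall_exists_sameType [Finite L] [Finite R] {X : Set D} (hX : X.Finite) :
    ∃ S : Set (Config L R D), S.Finite ∧ ∀ q, ∃ q' ∈ S, SameType X q q' := by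
  have := hX.to_subtype
  let type (q : Config L R D) : L × (R → R → Prop) × (R → X → Prop) :=
    (q.1, fun r s => q.2 r = q.2 s, fun r x => q.2 r = x)
  obtain ⟨S, -, hS⟩ := Set.exists_subset_bijOn Set.univ type
  refine ⟨S, hS.finite_iff_finite.2 (Set.toFinite _), fun q => ?_⟩
  obtain ⟨q', hq', htype⟩ := hS.surjOn (Set.mem_image_of_mem type (Set.mem_univ q))
  simp only [type, Prod.mk.injEq, funext_iff, eq_iff_iff, Subtype.forall] at htype
  obtain ⟨hloc, heq, hconst⟩ := htype
  exact ⟨q', hq', hloc.symm, fun r s => (heq r s).symm, fun r x hx => (hconst r x hx).symm⟩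

theorem exists_postWord_univ_subset_valuesIn [Finite L] [Fintype R] [Infinite D]
    (hdet : RADet D T) {w : List (A × D)}
    (hw : postWord T Set.univ w ⊆ valuesIn L R (dataSet w))
    {X : Finset D} (hX : Fintype.card R ≤ X.card) :
    ∃ u : List (A × D), dataSet u ⊆ X ∧ postWord T Set.univ u ⊆ valuesIn L R (X : Set D) := by
  obtain ⟨S, hSfin, hS⟩ :=
    exists_finite_forall_exists_sameType (L := L) (R := R) X.finite_toSet
  obtain ⟨u, hu, huS⟩ := exists_postWord_subset_valuesIn_of_finite hdet hw hX hSfin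
  refine ⟨u, hu, fun p hp => ?_⟩
  obtain ⟨p', hp', h⟩ := exists_sameType_of_mem_postWord hu (fun q _ => hS q) hp
  exact h.mem_valuesIn (huS hp')

end Types

theorem stmt0_general {L A R D : Type} [Finite L] [Fintype R] [Infinite D]
    (T : Set (RATrans L A R)) (hdet : RADet D T)
    (hstore : ∃ w : List (A × D), postWord T Set.univ w ⊆ valuesIn L R (dataSet w)) :
    ∃ w : List (A × D),
      (dataSet w).ncard ≤ Fintype.card R ∧ postWord T Set.univ w ⊆ valuesIn L R (dataSet w) := by
  obtain ⟨w, hw⟩ := hstore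
  obtain hA | hA := isEmpty_or_nonempty A
  · obtain rfl : w = [] := Subsingleton.elim w []
    exact ⟨[], by simp [dataSet_nil], hw⟩
  obtain ⟨X, hX⟩ := Infinite.exists_subset_card_eq D (Fintype.card R)
  obtain ⟨u, hu, huX⟩ := exists_postWord_univ_subset_valuesIn hdet hw hX.ge
  obtain ⟨v, hv⟩ := exists_dataSet_eq (A := A) X.finite_toSet
  have huv : dataSet (u ++ v) = X := by rw [dataSet_append, hv, Set.union_eq_right.2 hu]
  refine ⟨u ++ v, ?_, ?_⟩
  · rw [huv, Set.ncard_coe_finset, hX]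
  · rw [huv, postWord_append]
    exact postWord_subset_valuesIn huX hv.subset

/-- for every complete DRA over an infinite data domain that admits a
synchronizing data word, there is a data word `w` with at most `|R|` distinct data
values such that every configuration reached from anywhere by reading `w` has all its
register values among the data of `w`. -/
theorem stmt0 {L A R D : Type} [Fintype L] [Fintype A] [Fintype R] [Infinite D]
    (T : Set (RATrans L A R))
    (hcomp : RAComplete D T) (hdet : RADet D T)
    (hsync : ∃ w : List (A × D), IsSync D T w) :
    ∃ w : List (A × D),
      (dataSet w).ncard ≤ Fintype.card R ∧
      postWord T (Set.univ : Set (Config L R D)) w ⊆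
        {q : Config L R D | ∀ r : R, q.2 r ∈ dataSet w} := by
  obtain ⟨w, hw⟩ := hsync
  exact stmt0_general T hdet ⟨w, hw.postWord_univ_subset hcomp⟩
end

section
/- Let A = (L, R, Σ, T) be a complete deterministic register automaton with k registers over an infinite data domain D. Suppose there exist a data word w_0 and a finite set X ⊆ D such that post(L × D^k, w_0) ⊆ L × X^k, and suppose that for every pair of configurations q_1, q_2 ∈ L × X^k there exists a data word u ∈ (Σ × X)^* with |post({q_1, q_2}, u)| = 1. Then A has a synchronizing data word. -/
open scoped Classical

/-!
In a complete deterministic automaton every word acts on configurations as a map. Among the words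
ending in `w₀`, choose one, `w`, whose action has the fewest values. If two of these values were
distinct, then, lying in the finite image of `w₀`, they would be merged by some word `u`, and
`w ++ u ++ w₀` would take fewer values still. It does not matter that `u` may lead outside the image
of `w₀`: the final `w₀` leads back into it.
-/

theorem ncard_image_lt_ncard_of_eq {σ τ : Type*} {f : σ → τ} {s : Set σ} (hs : s.Finite)
    {x y : σ} (hx : x ∈ s) (hy : y ∈ s) (hne : x ≠ y) (hxy : f x = f y) :
    (f '' s).ncard < s.ncard :=
  (Set.ncard_image_le hs).lt_of_ne fun hcard =>
    hne (Set.injOn_of_ncard_image_eq hcard hs hx hy hxy)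

section WordAction

variable {σ α : Type*}

/-- The action of the word `w` on the states of the deterministic, possibly infinite automaton with
transition function `step`; letters are read from left to right. -/
def run (step : σ → α → σ) (w : List α) (q : σ) : σ :=
  w.foldl step q

theorem run_append (step : σ → α → σ) (v w : List α) :
    run step (v ++ w) = run step w ∘ run step v :=
  funext fun _ => List.foldl_append

theorem range_run_append (step : σ → α → σ) (v w : List α) :
    Set.range (run step (v ++ w)) = run step w '' Set.range (run step v) := by
  rw [run_append, Set.range_comp]

theorem range_run_append_subset (step : σ → α → σ) (v w : List α) :
    Set.range (run step (v ++ w)) ⊆ Set.range (run step w) := by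
  rw [range_run_append]
  exact Set.image_subset_range _ _

theorem exists_range_run_eq_singleton [Nonempty σ] {step : σ → α → σ} {w₀ : List α}
    (hfin : (Set.range (run step w₀)).Finite)
    (hmerge : ∀ x ∈ Set.range (run step w₀), ∀ y ∈ Set.range (run step w₀),
      ∃ u, run step u x = run step u y) :
    ∃ w q, Set.range (run step w) = {q} := by
  let rank (v : List α) : ℕ := (Set.range (run step (v ++ w₀))).ncard
  obtain ⟨v, hmin⟩ : ∃ v, ∀ v', rank v ≤ rank v' :=
    ⟨Function.argmin rank, fun v' => Function.argmin_le rank v'⟩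
  have hsub := range_run_append_subset step v w₀
  have hfin_v := hfin.subset hsub
  have hss : (Set.range (run step (v ++ w₀))).Subsingleton := by
    intro x hx y hy
    by_contra hne
    obtain ⟨u, hu⟩ := hmerge x (hsub hx) y (hsub hy)
    refine (hmin (v ++ w₀ ++ u)).not_gt ?_
    calc rank (v ++ w₀ ++ u)
        = (run step w₀ '' (run step u '' Set.range (run step (v ++ w₀)))).ncard := by
          simp only [rank, range_run_append]
      _ ≤ (run step u '' Set.range (run step (v ++ w₀))).ncard :=
          Set.ncard_image_le (hfin_v.image _)
      _ < rank v := ncard_image_lt_ncard_of_eq hfin_v hx hy hne hu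
  obtain ⟨q, hq⟩ := Set.range_nonempty (run step (v ++ w₀))
  exact ⟨v ++ w₀, q, hss.eq_singleton_of_mem hq⟩

end WordAction

section RegisterAutomaton

variable {L A R D : Type} {T : Set (RATrans L A R)}

theorem exists_forall_step_iff_eq (hcomp : RAComplete D T) (hdet : RADet D T) :
    ∃ next : Config L R D → A × D → Config L R D, ∀ q i q', Step T q i q' ↔ next q i = q' := by
  choose next hnext using hcomp
  exact ⟨next, fun q i q' => ⟨hdet q i _ _ (hnext q i), fun h => h ▸ hnext q i⟩⟩

variable {next : Config L R D → A × D → Config L R D}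

theorem postWord_eq_image_run (hnext : ∀ q i q', Step T q i q' ↔ next q i = q')
    (S : Set (Config L R D)) (w : List (A × D)) : postWord T S w = run next w '' S := by
  induction w generalizing S with
  | nil => exact (Set.image_id S).symm
  | cons i w ih =>
    have hstep : postStep T S i = (next · i) '' S := by
      simp only [postStep, hnext, Set.image]
    rw [postWord, ih, hstep, Set.image_image]
    rfl

theorem postWord_univ_eq_range_run (hnext : ∀ q i q', Step T q i q' ↔ next q i = q')
    (w : List (A × D)) : postWord T Set.univ w = Set.range (run next w) := by
  rw [postWord_eq_image_run hnext, Set.image_univ]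

theorem run_eq_run_of_postWord_pair (hnext : ∀ q i q', Step T q i q' ↔ next q i = q')
    {q₁ q₂ q : Config L R D} {u : List (A × D)} (hu : postWord T {q₁, q₂} u = {q}) :
    run next u q₁ = run next u q₂ := by
  rw [postWord_eq_image_run hnext, Set.image_pair] at hu
  exact Set.subsingleton_of_subset_singleton hu.subset (Set.mem_insert _ _)
    (Set.mem_insert_of_mem _ rfl)

theorem finite_setOf_registers_mem [Finite L] [Finite R] {X : Set D} (hX : X.Finite) :
    {q : Config L R D | ∀ r, q.2 r ∈ X}.Finite :=
  (Set.finite_univ.prod (Set.Finite.pi' fun _ => hX)).subset fun _ hq => ⟨trivial, hq⟩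

end RegisterAutomaton

theorem stmt5_general {L A R D : Type} [Nonempty L] [Nonempty A] [Nonempty D]
    (T : Set (RATrans L A R)) (hcomp : RAComplete D T) (hdet : RADet D T)
    (hyp : ∃ w₀ : List (A × D), (postWord T (Set.univ : Set (Config L R D)) w₀).Finite ∧
      ∀ q₁ ∈ postWord T (Set.univ : Set (Config L R D)) w₀,
      ∀ q₂ ∈ postWord T (Set.univ : Set (Config L R D)) w₀,
        ∃ (u : List (A × D)) (q : Config L R D), postWord T {q₁, q₂} u = {q}) :
    ∃ w : List (A × D), IsSync D T w := by
  obtain ⟨w₀, hfin, hmerge⟩ := hyp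
  obtain ⟨next, hnext⟩ := exists_forall_step_iff_eq hcomp hdet
  rw [postWord_univ_eq_range_run hnext] at hfin hmerge
  obtain ⟨w, q, hw⟩ := exists_range_run_eq_singleton hfin fun q₁ h₁ q₂ h₂ =>
    let ⟨u, _, hu⟩ := hmerge q₁ h₁ q₂ h₂
    ⟨u, run_eq_run_of_postWord_pair hnext hu⟩
  -- `w` may be empty, while a synchronizing word may not: read one more letter.
  obtain ⟨i⟩ : Nonempty (A × D) := inferInstance
  refine ⟨w ++ [i], List.append_ne_nil_of_right_ne_nil w (List.cons_ne_nil i []), next q i, ?_⟩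
  rw [postWord_univ_eq_range_run hnext, range_run_append, hw, Set.image_singleton]
  rfl

/-- if a complete DRA admits a data word `w₀` and a finite set `X ⊆ D`
such that `post(L × D^k, w₀) ⊆ L × X^k`, and every pair of configurations with all
register values in `X` can be merged into a single configuration by a data word over
`Σ × X`, then the DRA has a synchronizing data word. -/
theorem stmt5 {L A R D : Type} [Fintype L] [Fintype A] [Fintype R] [Infinite D]
    [Nonempty L] [Nonempty A]
    (T : Set (RATrans L A R))
    (hcomp : RAComplete D T) (hdet : RADet D T)
    (hyp : ∃ (w₀ : List (A × D)) (X : Set D), X.Finite ∧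
      postWord T (Set.univ : Set (Config L R D)) w₀ ⊆
        {q : Config L R D | ∀ r : R, q.2 r ∈ X} ∧
      ∀ q₁ q₂ : Config L R D, (∀ r : R, q₁.2 r ∈ X) → (∀ r : R, q₂.2 r ∈ X) →
        ∃ u : List (A × D), (∀ p ∈ u, p.2 ∈ X) ∧
          ∃ q : Config L R D, postWord T {q₁, q₂} u = {q}) :
    ∃ w : List (A × D), IsSync D T w := by
  obtain ⟨w₀, X, hX, hw₀, hmerge⟩ := hyp
  exact stmt5_general T hcomp hdet ⟨w₀, (finite_setOf_registers_mem hX).subset hw₀,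
    fun q₁ h₁ q₂ h₂ => (hmerge q₁ q₂ (hw₀ h₁) (hw₀ h₂)).imp fun _ hu => hu.2⟩
end

section
/- For every n ≥ 1, every synchronizing data word for the deterministic register automaton R_n (defined in the context) has data efficiency at least n + 1. -/
open scoped Classical

/-- Locations of the DRA `R_{n+1}` from the paper: `init`, `synch`, and two chains
`left i` (= `ℓ_{i+1}`) and `right i` (= `ℓ'_{i+1}`) for `i : Fin (n+1)`. -/
inductive RnLoc (n : ℕ) : Type
  | init : RnLoc n
  | synch : RnLoc n
  | left : Fin (n + 1) → RnLoc n
  | right : Fin (n + 1) → RnLoc n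

/-- Disjunction of register constraints, expressed via conjunction and negation. -/
def RC.or {R : Type} (φ ψ : RC R) : RC R := RC.neg (RC.conj (RC.neg φ) (RC.neg ψ))

/-- The constraint `⋁_{r ∈ l} (= r)` (an empty disjunction is false). -/
def bigOrEq {R : Type} (l : List R) : RC R :=
  l.foldr (fun r acc => RC.or (RC.req r) acc) (RC.neg RC.tt)

/-- The constraint `⋀_{r ∈ l} ¬(= r)`. -/
def bigAndNeq {R : Type} (l : List R) : RC R :=
  l.foldr (fun r acc => RC.conj (RC.neg (RC.req r)) acc) RC.tt

/-- The registers `r_1, …, r_{i+1}`, i.e. all `j ≤ i`. -/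
def regsUpTo (n : ℕ) (i : Fin (n + 1)) : List (Fin (n + 1)) :=
  (List.finRange (n + 1)).filter (fun j => j ≤ i)

/-- The transitions of the DRA `R_{n+1}` from the paper (all over the single letter
`()`), with registers `Fin (n+1)`. -/
inductive RnTrans (n : ℕ) : RATrans (RnLoc n) Unit (Fin (n + 1)) → Prop
  | initL : RnTrans n (RnLoc.init, (), RC.req 0, {0}, RnLoc.left 0)
  | initR : RnTrans n (RnLoc.init, (), RC.neg (RC.req 0), {0}, RnLoc.right 0)
  | loopL (i : Fin (n + 1)) :
      RnTrans n (RnLoc.left i, (), bigOrEq (regsUpTo n i), ∅, RnLoc.left i)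
  | loopR (i : Fin (n + 1)) :
      RnTrans n (RnLoc.right i, (), bigOrEq (regsUpTo n i), ∅, RnLoc.right i)
  | stepL (i : Fin (n + 1)) (h : (i : ℕ) < n) :
      RnTrans n (RnLoc.left i, (), bigAndNeq (regsUpTo n i),
        {⟨(i : ℕ) + 1, Nat.succ_lt_succ h⟩}, RnLoc.left ⟨(i : ℕ) + 1, Nat.succ_lt_succ h⟩)
  | stepR (i : Fin (n + 1)) (h : (i : ℕ) < n) :
      RnTrans n (RnLoc.right i, (), bigAndNeq (regsUpTo n i),
        {⟨(i : ℕ) + 1, Nat.succ_lt_succ h⟩}, RnLoc.right ⟨(i : ℕ) + 1, Nat.succ_lt_succ h⟩)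
  | lastL : RnTrans n (RnLoc.left (Fin.last n), (), bigAndNeq (regsUpTo n (Fin.last n)),
      Set.univ, RnLoc.synch)
  | lastR : RnTrans n (RnLoc.right (Fin.last n), (), bigAndNeq (regsUpTo n (Fin.last n)),
      Set.univ, RnLoc.synch)
  | synchLoop : RnTrans n (RnLoc.synch, (), RC.tt, Set.univ, RnLoc.synch)

/-- The transition relation of `R_{n+1}` as a set. -/
def RnT (n : ℕ) : Set (RATrans (RnLoc n) Unit (Fin (n + 1))) := {t | RnTrans n t}

/-!
In the last location of either chain, a datum stored in some register fires the loop, which leaves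
the configuration unchanged. If a word has at most as many data values as there are registers, some
valuation stores all of them, and this valuation is then stuck at the ends of both chains. The word
thus fails to merge two configurations. Registers left over are filled with an arbitrary datum;
one exists because the synchronized configuration stores it.
-/

theorem exists_subset_range_of_ncard_le {ι α : Type*} [Finite ι] [Nonempty α] {s : Set α}
    (hs : s.Finite) (hcard : s.ncard ≤ Nat.card ι) : ∃ f : ι → α, s ⊆ Set.range f := by
  have := hs.fintype
  have := Fintype.ofFinite ι
  obtain ⟨e⟩ : Nonempty (s ↪ ι) := Function.Embedding.nonempty_of_card_le <| by
    rwa [← Nat.card_eq_fintype_card, ← Nat.card_eq_fintype_card]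
  refine ⟨Function.extend e Subtype.val fun _ ↦ Classical.arbitrary α, fun a ha ↦ ?_⟩
  exact ⟨e ⟨a, ha⟩, e.injective.extend_apply _ _ _⟩

section Constraints

variable {R D : Type} {ν : R → D} {d : D}

theorem RC.sat_or {φ ψ : RC R} :
    RC.sat ν d (RC.or φ ψ) ↔ RC.sat ν d φ ∨ RC.sat ν d ψ := by
  simp only [RC.or, RC.sat, or_iff_not_and_not]

theorem sat_bigOrEq {l : List R} : RC.sat ν d (bigOrEq l) ↔ ∃ r ∈ l, ν r = d := by
  induction l with
  | nil => simp [bigOrEq, RC.sat]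
  | cons r l ih =>
    change RC.sat ν d (RC.or (RC.req r) (bigOrEq l)) ↔ _
    rw [RC.sat_or, ih, List.exists_mem_cons_iff, RC.sat]

theorem updVal_empty (ν : R → D) (d : D) : updVal ν ∅ d = ν :=
  funext fun _ ↦ if_neg (Set.notMem_empty _)

end Constraints

theorem dataSet_finite {A D : Type} (w : List (A × D)) : (dataSet w).Finite :=
  (List.finite_toSet w).image Prod.snd

section RegisterAutomata

variable {L A R D : Type} {T : Set (RATrans L A R)}

theorem step_self_of_mem {ℓ : L} {a : A} {φ : RC R} {ν : R → D} {d : D}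
    (hT : (ℓ, a, φ, ∅, ℓ) ∈ T) (hφ : RC.sat ν d φ) : Step T (ℓ, ν) (a, d) (ℓ, ν) :=
  ⟨φ, ∅, ℓ, hT, hφ, by rw [updVal_empty]⟩

theorem mem_postWord_of_forall_step_self {q : Config L R D} {w : List (A × D)}
    (hstep : ∀ p ∈ w, Step T q p q) {S : Set (Config L R D)} (hq : q ∈ S) :
    q ∈ postWord T S w := by
  induction w generalizing S with
  | nil => exact hq
  | cons p w ih =>
    obtain ⟨hp, hw⟩ := List.forall_mem_cons.1 hstep
    exact ih hw ⟨q, hq, hp⟩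

theorem IsSync.eq_of_forall_step_self {w : List (A × D)} (hw : IsSync D T w)
    {q₁ q₂ : Config L R D} (h₁ : ∀ p ∈ w, Step T q₁ p q₁) (h₂ : ∀ p ∈ w, Step T q₂ p q₂) :
    q₁ = q₂ := by
  obtain ⟨-, q, hpost⟩ := hw
  have hunique {q' : Config L R D} (h : ∀ p ∈ w, Step T q' p q') : q' = q :=
    hpost.subset (mem_postWord_of_forall_step_self h (Set.mem_univ q'))
  exact (hunique h₁).trans (hunique h₂).symm

theorem IsSync.nonempty_data [Nonempty R] {w : List (A × D)} (hw : IsSync D T w) :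
    Nonempty D :=
  let ⟨_, q, _⟩ := hw
  ‹Nonempty R›.map q.2

end RegisterAutomata

section Chains

variable {D : Type} {n : ℕ}

theorem mem_regsUpTo {i j : Fin (n + 1)} : j ∈ regsUpTo n i ↔ j ≤ i := by
  simp [regsUpTo]

theorem sat_bigOrEq_regsUpTo {i : Fin (n + 1)} {ν : Fin (n + 1) → D} {d : D} :
    RC.sat ν d (bigOrEq (regsUpTo n i)) ↔ ∃ j ≤ i, ν j = d := by
  simp only [sat_bigOrEq, mem_regsUpTo]

theorem step_left_self {i : Fin (n + 1)} {ν : Fin (n + 1) → D} {d : D}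
    (hd : ∃ j ≤ i, ν j = d) :
    Step (RnT n) (RnLoc.left i, ν) ((), d) (RnLoc.left i, ν) :=
  step_self_of_mem (RnTrans.loopL i) (sat_bigOrEq_regsUpTo.2 hd)

theorem step_right_self {i : Fin (n + 1)} {ν : Fin (n + 1) → D} {d : D}
    (hd : ∃ j ≤ i, ν j = d) :
    Step (RnT n) (RnLoc.right i, ν) ((), d) (RnLoc.right i, ν) :=
  step_self_of_mem (RnTrans.loopR i) (sat_bigOrEq_regsUpTo.2 hd)

theorem not_isSync_of_dataSet_subset_range {ν : Fin (n + 1) → D} {w : List (Unit × D)}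
    (hν : dataSet w ⊆ Set.range ν) : ¬ IsSync D (RnT n) w := by
  intro hw
  have hstored : ∀ p ∈ w, ∃ j ≤ Fin.last n, ν j = p.2 := fun p hp ↦
    let ⟨j, hj⟩ := hν ⟨p, hp, rfl⟩
    ⟨j, j.le_last, hj⟩
  have heq : (RnLoc.left (Fin.last n), ν) = (RnLoc.right (Fin.last n), ν) :=
    hw.eq_of_forall_step_self (fun p hp ↦ step_left_self (hstored p hp))
      (fun p hp ↦ step_right_self (hstored p hp))
  cases heq

end Chains

theorem stmt6_general {D : Type} (m : ℕ) (w : List (Unit × D)) (hw : IsSync D (RnT m) w) :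
    (m + 1) + 1 ≤ (dataSet w).ncard := by
  by_contra! hlt
  have := hw.nonempty_data
  have hcard : (dataSet w).ncard ≤ Nat.card (Fin (m + 1)) := by
    rw [Nat.card_fin]
    exact Nat.le_of_lt_succ hlt
  obtain ⟨ν, hν⟩ := exists_subset_range_of_ncard_le (dataSet_finite w) hcard
  exact not_isSync_of_dataSet_subset_range hν hw

/-- for every `n ≥ 1`, every synchronizing data word of the DRA `R_n`
(here `R_{m+1} = RnT m`, so `n = m + 1` ranges over all `n ≥ 1`) has data efficiency at
least `n + 1`, i.e. at least `m + 2`. -/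
theorem stmt6 {D : Type} [Infinite D] (m : ℕ)
    (w : List (Unit × D)) (hw : IsSync D (RnT m) w) :
    (m + 1) + 1 ≤ (dataSet w).ncard :=
  stmt6_general m w hw
end
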